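/- arXiv:1206.1310 — 4 statements merged into one kernel-verified Lean document; each statement's English description precedes it below -/
import Mathlib

section
/- Let E_{k-1}, E_k, E_{k+1} be finite types with positive weight functions μ_{k-1}, μ_k, μ_{k+1} (all values > 0) and parity functions sgn : E_{k-1} × E_k → ℤ, sgn : E_k × E_{k+1} → ℤ with values in {-1,0,1} satisfying the cocycle condition ∑_{e_k} sgn(e_{k-1},e_k)·sgn(e_k,e_{k+1}) = 0 for all e_{k-1}, e_{k+1}. Let D_k = (E_k → ℂ) with inner product ⟨f,g⟩_k = ∑_{e} μ_k(e) f(e) conj(g(e)) and H_k = {f : d_k f = 0 and δ_k f = 0}. Then ker(d_k) = range(d_{k-1}) ⊕ H_k as an orthogonal direct sum; consequently H_k is linearly isomorphic to the deRham cohomology space ker(d_k)/range(d_{k-1}), and dim H_k = dim ker(d_k) − dim range(d_{k-1}). -/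
/-!
The operators `d` and `δ` are adjoint for the weighted inner products (`ip_dMap`), and these inner
products are positive definite because the weights are positive (`eq_zero_of_ip_self`). Hence
`range d ⊓ ker δ = ⊥`, and `ker (d ∘ δ) = ker δ`, so that `rank δ ≤ rank d`. By rank–nullity,
`range d` and `ker δ` are then complementary in the space of all `k`-forms
(`isCompl_range_dMap_ker_deltaMap`). The cocycle condition gives `range d_{k-1} ≤ ker d_k`, so the
modular law restricts this decomposition to `ker d_k`; the isomorphism with the cohomology and the
dimension formula are formal consequences.
-/

/-- The deRham derivative `d` as a `ℂ`-linear map on graph forms. -/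
noncomputable def dMap {A B : Type*} [Fintype A] (sgn : A → B → ℤ) :
    (A → ℂ) →ₗ[ℂ] (B → ℂ) where
  toFun f := fun b => ∑ a : A, (sgn a b : ℂ) * f a
  map_add' f g := by
    funext b
    show ∑ a : A, (sgn a b : ℂ) * (f a + g a) =
      (∑ a : A, (sgn a b : ℂ) * f a) + ∑ a : A, (sgn a b : ℂ) * g a
    rw [← Finset.sum_add_distrib]
    exact Finset.sum_congr rfl fun a _ => mul_add _ _ _
  map_smul' c f := by
    funext b
    show ∑ a : A, (sgn a b : ℂ) * (c * f a) = c * ∑ a : A, (sgn a b : ℂ) * f a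
    rw [Finset.mul_sum]
    exact Finset.sum_congr rfl fun a _ => by ring

/-- The dual deRham derivative `δ` as a `ℂ`-linear map on weighted graph forms. -/
noncomputable def deltaMap {A B : Type*} [Fintype B] (μA : A → ℝ) (μB : B → ℝ)
    (sgn : A → B → ℤ) : (B → ℂ) →ₗ[ℂ] (A → ℂ) where
  toFun f := fun a => ∑ b : B, ((μB b / μA a : ℝ) : ℂ) * (sgn a b : ℂ) * f b
  map_add' f g := by
    funext a
    show ∑ b : B, ((μB b / μA a : ℝ) : ℂ) * (sgn a b : ℂ) * (f b + g b) =
      (∑ b : B, ((μB b / μA a : ℝ) : ℂ) * (sgn a b : ℂ) * f b) +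
        ∑ b : B, ((μB b / μA a : ℝ) : ℂ) * (sgn a b : ℂ) * g b
    rw [← Finset.sum_add_distrib]
    exact Finset.sum_congr rfl fun b _ => mul_add _ _ _
  map_smul' c f := by
    funext a
    show ∑ b : B, ((μB b / μA a : ℝ) : ℂ) * (sgn a b : ℂ) * (c * f b) =
      c * ∑ b : B, ((μB b / μA a : ℝ) : ℂ) * (sgn a b : ℂ) * f b
    rw [Finset.mul_sum]
    exact Finset.sum_congr rfl fun b _ => by ring

/-- The weighted inner product `⟨f, g⟩ = ∑_e μ(e) f(e) conj(g(e))`. -/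
noncomputable def ip {A : Type*} [Fintype A] (μ : A → ℝ) (f g : A → ℂ) : ℂ :=
  ∑ a : A, (μ a : ℂ) * f a * (starRingEnd ℂ) (g a)

/-- `δ` is the adjoint of `d`: the factor `1 / μA a` in `δ` cancels the weight of `ip μA`. -/
theorem ip_dMap {A B : Type*} [Fintype A] [Fintype B] (μA : A → ℝ) (μB : B → ℝ)
    (hA : ∀ a, 0 < μA a) (sgn : A → B → ℤ) (g : A → ℂ) (u : B → ℂ) :
    ip μB (dMap sgn g) u = ip μA g (deltaMap μA μB sgn u) := by
  show ∑ b, (μB b : ℂ) * (∑ a, (sgn a b : ℂ) * g a) * (starRingEnd ℂ) (u b) =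
    ∑ a, (μA a : ℂ) * g a *
      (starRingEnd ℂ) (∑ b, ((μB b / μA a : ℝ) : ℂ) * (sgn a b : ℂ) * u b)
  simp only [map_sum, Finset.mul_sum, Finset.sum_mul]
  rw [Finset.sum_comm]
  refine Finset.sum_congr rfl fun a _ => Finset.sum_congr rfl fun b _ => ?_
  have ha : (μA a : ℂ) ≠ 0 := by exact_mod_cast (hA a).ne'
  simp only [map_mul, Complex.conj_ofReal, map_intCast]
  push_cast
  field_simp

theorem eq_zero_of_ip_self {A : Type*} [Fintype A] (μ : A → ℝ) (hμ : ∀ a, 0 < μ a)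
    (f : A → ℂ) (h : ip μ f f = 0) : f = 0 := by
  have h1 : ∑ a, μ a * Complex.normSq (f a) = 0 := by
    have h2 : ((∑ a, μ a * Complex.normSq (f a) : ℝ) : ℂ) = 0 := by
      rw [← h, ip]
      push_cast
      exact Finset.sum_congr rfl fun a _ => by rw [mul_assoc, Complex.mul_conj]
    exact_mod_cast h2
  rw [Finset.sum_eq_zero_iff_of_nonneg
    fun a _ => mul_nonneg (hμ a).le (Complex.normSq_nonneg _)] at h1
  funext a
  exact Complex.normSq_eq_zero.1 ((mul_eq_zero.1 (h1 a (Finset.mem_univ a))).resolve_left (hμ a).ne')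

theorem isCompl_range_dMap_ker_deltaMap {A B : Type*} [Fintype A] [Fintype B]
    (μA : A → ℝ) (μB : B → ℝ) (hA : ∀ a, 0 < μA a) (hB : ∀ b, 0 < μB b) (sgn : A → B → ℤ) :
    IsCompl (LinearMap.range (dMap sgn)) (LinearMap.ker (deltaMap μA μB sgn)) := by
  have hdisj : Disjoint (LinearMap.range (dMap sgn)) (LinearMap.ker (deltaMap μA μB sgn)) := by
    rw [Submodule.disjoint_def]
    rintro _ ⟨g, rfl⟩ hg
    apply eq_zero_of_ip_self μB hB
    rw [ip_dMap μA μB hA, LinearMap.mem_ker.1 hg]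
    simp [ip]
  -- `d` is injective on `range δ`, since `d (δ u) = 0` gives `⟨δ u, δ u⟩ = ⟨d (δ u), u⟩ = 0`.
  have hker : LinearMap.ker (dMap sgn ∘ₗ deltaMap μA μB sgn) =
      LinearMap.ker (deltaMap μA μB sgn) := by
    refine le_antisymm (fun u hu => ?_) (LinearMap.ker_le_ker_comp _ _)
    apply eq_zero_of_ip_self μA hA
    rw [← ip_dMap μA μB hA]
    have hu' : dMap sgn (deltaMap μA μB sgn u) = 0 := hu
    rw [hu']
    simp [ip]
  have hrk := LinearMap.finrank_range_add_finrank_ker (dMap sgn ∘ₗ deltaMap μA μB sgn)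
  rw [hker] at hrk
  have hle : Module.finrank ℂ (LinearMap.range (dMap sgn ∘ₗ deltaMap μA μB sgn)) ≤
      Module.finrank ℂ (LinearMap.range (dMap sgn)) :=
    Submodule.finrank_mono (LinearMap.range_comp_le_range _ _)
  have hsum := Submodule.finrank_add_finrank_le_of_disjoint hdisj
  exact ⟨hdisj, codisjoint_iff.2 (Submodule.eq_top_of_disjoint _ _ (by omega) hdisj)⟩

theorem range_dMap_le_ker_dMap {A B C : Type*} [Fintype A] [Fintype B]
    (sgn₁ : A → B → ℤ) (sgn₂ : B → C → ℤ)
    (hcoc : ∀ (a : A) (c : C), ∑ b : B, sgn₁ a b * sgn₂ b c = 0) :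
    LinearMap.range (dMap sgn₁) ≤ LinearMap.ker (dMap sgn₂) := by
  rintro _ ⟨g, rfl⟩
  rw [LinearMap.mem_ker]
  funext c
  show ∑ b, (sgn₂ b c : ℂ) * (∑ a, (sgn₁ a b : ℂ) * g a) = 0
  simp only [Finset.mul_sum]
  rw [Finset.sum_comm]
  refine Finset.sum_eq_zero fun a _ => ?_
  have h : ∑ b, (sgn₁ a b : ℂ) * (sgn₂ b c : ℂ) = 0 := by exact_mod_cast hcoc a c
  calc ∑ b, (sgn₂ b c : ℂ) * ((sgn₁ a b : ℂ) * g a)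
      = (∑ b, (sgn₁ a b : ℂ) * (sgn₂ b c : ℂ)) * g a := by
        rw [Finset.sum_mul]
        exact Finset.sum_congr rfl fun b _ => by ring
    _ = 0 := by rw [h, zero_mul]

/-- `ker d_k = range d_{k-1} ⊕ H_k` as an orthogonal direct sum;
consequently the harmonic forms `H_k` realize the deRham cohomology
`ker d_k / range d_{k-1}`, and `dim H_k = dim ker d_k − dim range d_{k-1}`. -/
theorem harmonic_realizes_cohomology
    {Ekm1 Ek Ekp1 : Type*} [Fintype Ekm1] [Fintype Ek] [Fintype Ekp1]
    (μkm1 : Ekm1 → ℝ) (μk : Ek → ℝ) (μkp1 : Ekp1 → ℝ)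
    (hμkm1 : ∀ a, 0 < μkm1 a) (hμk : ∀ b, 0 < μk b) (hμkp1 : ∀ c, 0 < μkp1 c)
    (sgn₁ : Ekm1 → Ek → ℤ) (sgn₂ : Ek → Ekp1 → ℤ)
    (hsgn₁ : ∀ a b, sgn₁ a b = -1 ∨ sgn₁ a b = 0 ∨ sgn₁ a b = 1)
    (hsgn₂ : ∀ b c, sgn₂ b c = -1 ∨ sgn₂ b c = 0 ∨ sgn₂ b c = 1)
    (hcoc : ∀ (a : Ekm1) (c : Ekp1), ∑ b : Ek, sgn₁ a b * sgn₂ b c = 0) :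
    LinearMap.ker (dMap sgn₂) =
        LinearMap.range (dMap sgn₁) ⊔
          (LinearMap.ker (dMap sgn₂) ⊓ LinearMap.ker (deltaMap μkm1 μk sgn₁)) ∧
    (∀ g : Ekm1 → ℂ, ∀ u ∈ LinearMap.ker (dMap sgn₂) ⊓ LinearMap.ker (deltaMap μkm1 μk sgn₁),
        ip μk (dMap sgn₁ g) u = 0) ∧
    Nonempty
      ((↥(LinearMap.ker (dMap sgn₂) ⊓ LinearMap.ker (deltaMap μkm1 μk sgn₁))) ≃ₗ[ℂ]
        (↥(LinearMap.ker (dMap sgn₂)) ⧸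
          Submodule.comap (LinearMap.ker (dMap sgn₂)).subtype (LinearMap.range (dMap sgn₁)))) ∧
    Module.finrank ℂ ↥(LinearMap.ker (dMap sgn₂) ⊓ LinearMap.ker (deltaMap μkm1 μk sgn₁)) =
      Module.finrank ℂ ↥(LinearMap.ker (dMap sgn₂)) -
        Module.finrank ℂ ↥(LinearMap.range (dMap sgn₁)) := by
  have hc := isCompl_range_dMap_ker_deltaMap μkm1 μk hμkm1 hμk sgn₁
  have hle := range_dMap_le_ker_dMap sgn₁ sgn₂ hcoc
  have horth : ∀ g : Ekm1 → ℂ,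
      ∀ u ∈ LinearMap.ker (dMap sgn₂) ⊓ LinearMap.ker (deltaMap μkm1 μk sgn₁),
        ip μk (dMap sgn₁ g) u = 0 := by
    rintro g u ⟨-, hu⟩
    rw [ip_dMap μkm1 μk hμkm1, LinearMap.mem_ker.1 hu]
    simp [ip]
  generalize LinearMap.ker (deltaMap μkm1 μk sgn₁) = K at *
  generalize LinearMap.range (dMap sgn₁) = R at *
  generalize LinearMap.ker (dMap sgn₂) = Z at *
  have hsup : Z = R ⊔ (Z ⊓ K) := by
    rw [inf_comm, ← sup_inf_assoc_of_le K hle, hc.sup_eq_top, top_inf_eq]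
  have hinf : R ⊓ (Z ⊓ K) = ⊥ := (hc.disjoint.mono_right inf_le_right).eq_bot
  have hcZ : IsCompl (Submodule.comap Z.subtype R) (Submodule.comap Z.subtype (Z ⊓ K)) := by
    refine ⟨?_, ?_⟩
    · rw [disjoint_iff, ← Submodule.comap_inf, hinf, Submodule.comap_bot, Submodule.ker_subtype]
    · rw [codisjoint_iff, ← Submodule.submoduleOf, ← Submodule.submoduleOf,
        ← Submodule.submoduleOf_sup_of_le hle inf_le_left, ← hsup, Submodule.submoduleOf_self]
  refine ⟨hsup, horth, ⟨((Submodule.quotientEquivOfIsCompl _ _ hcZ).trans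
    (Submodule.comapSubtypeEquivOfLe inf_le_left)).symm⟩, ?_⟩
  have hdim := Submodule.finrank_sup_add_finrank_inf_eq R (Z ⊓ K)
  rw [hinf, ← hsup, finrank_bot] at hdim
  omega
end

section
/- Let E_{k-2}, E_{k-1}, E_k, E_{k+1} be finite types with positive weights μ_{k-2}, μ_{k-1}, μ_k, μ_{k+1} (all values > 0) and parity functions between each pair of consecutive levels (values in {-1,0,1}), satisfying the cocycle condition ∑ sgn·sgn = 0 on both triples (E_{k-2},E_{k-1},E_k) and (E_{k-1},E_k,E_{k+1}). Let d_j, δ_j be the deRham and dual derivatives. Suppose f : E_{k-1} → ℂ satisfies f = δ_k g for some g : E_k → ℂ, and f is an eigenfunction of the Laplacian on (k-1)-forms: (δ_k ∘ d_{k-1} + d_{k-2} ∘ δ_{k-1}) f = λ f for some λ ∈ ℂ. Then d_{k-1} f is an eigenfunction of the Laplacian on k-forms with the same eigenvalue: (δ_{k+1} ∘ d_k + d_{k-1} ∘ δ_k)(d_{k-1} f) = λ · (d_{k-1} f). -/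
/-- The deRham derivative `d` on graph forms:
`d f (e_{k}) = ∑_{e_{k-1}} sgn(e_{k-1}, e_k) f(e_{k-1})`. -/
noncomputable def dDeriv {A B : Type*} [Fintype A] (sgn : A → B → ℤ) (f : A → ℂ) : B → ℂ :=
  fun b => ∑ a : A, (sgn a b : ℂ) * f a

/-- The dual deRham derivative `δ` on weighted graph forms:
`δ f (e_{k-1}) = ∑_{e_k} (μ_k(e_k)/μ_{k-1}(e_{k-1})) sgn(e_{k-1}, e_k) f(e_k)`. -/
noncomputable def deltaDeriv {A B : Type*} [Fintype B] (μA : A → ℝ) (μB : B → ℝ)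
    (sgn : A → B → ℤ) (f : B → ℂ) : A → ℂ :=
  fun a => ∑ b : B, ((μB b / μA a : ℝ) : ℂ) * (sgn a b : ℂ) * f b

/-- The cocycle condition on the parities gives `d ∘ d = 0`. -/
theorem dDeriv_dDeriv {A B C : Type*} [Fintype A] [Fintype B]
    (s : A → B → ℤ) (t : B → C → ℤ)
    (hcoc : ∀ (a : A) (c : C), ∑ b : B, s a b * t b c = 0) (f : A → ℂ) :
    dDeriv t (dDeriv s f) = 0 := by
  funext c
  simp only [dDeriv, Finset.mul_sum, Pi.zero_apply]
  rw [Finset.sum_comm]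
  refine Finset.sum_eq_zero fun a _ => ?_
  have h : ∑ b : B, (s a b : ℂ) * (t b c : ℂ) = 0 := by exact_mod_cast hcoc a c
  calc ∑ b : B, (t b c : ℂ) * ((s a b : ℂ) * f a)
      = (∑ b : B, (s a b : ℂ) * (t b c : ℂ)) * f a := by
        rw [Finset.sum_mul]
        exact Finset.sum_congr rfl fun b _ => by ring
    _ = 0 := by rw [h, zero_mul]

theorem dDeriv_add {A B : Type*} [Fintype A] (s : A → B → ℤ) (f g : A → ℂ) :
    dDeriv s (f + g) = dDeriv s f + dDeriv s g := by
  funext b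
  simp [dDeriv, mul_add, Finset.sum_add_distrib]

theorem dDeriv_smul {A B : Type*} [Fintype A] (s : A → B → ℤ) (z : ℂ) (f : A → ℂ) :
    dDeriv s (z • f) = z • dDeriv s f := by
  funext b
  simp [dDeriv, Finset.mul_sum, mul_left_comm]

theorem deltaDeriv_zero {A B : Type*} [Fintype B] (μA : A → ℝ) (μB : B → ℝ)
    (s : A → B → ℤ) : deltaDeriv μA μB s 0 = 0 := by
  funext a
  simp [deltaDeriv]

/-- If `f` lies in the range of `δ_k` and is a `λ`-eigenfunction of
the Laplacian on `(k-1)`-forms, then `d_{k-1} f` is a `λ`-eigenfunction of the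
Laplacian on `k`-forms. -/
theorem delta_spectrum_maps_to_d_spectrum
    {Ekm2 Ekm1 Ek Ekp1 : Type*}
    [Fintype Ekm2] [Fintype Ekm1] [Fintype Ek] [Fintype Ekp1]
    (μkm2 : Ekm2 → ℝ) (μkm1 : Ekm1 → ℝ) (μk : Ek → ℝ) (μkp1 : Ekp1 → ℝ)
    (hμkm2 : ∀ a, 0 < μkm2 a) (hμkm1 : ∀ a, 0 < μkm1 a)
    (hμk : ∀ b, 0 < μk b) (hμkp1 : ∀ c, 0 < μkp1 c)
    (sgn₀ : Ekm2 → Ekm1 → ℤ) (sgn₁ : Ekm1 → Ek → ℤ) (sgn₂ : Ek → Ekp1 → ℤ)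
    (hsgn₀ : ∀ a b, sgn₀ a b = -1 ∨ sgn₀ a b = 0 ∨ sgn₀ a b = 1)
    (hsgn₁ : ∀ a b, sgn₁ a b = -1 ∨ sgn₁ a b = 0 ∨ sgn₁ a b = 1)
    (hsgn₂ : ∀ b c, sgn₂ b c = -1 ∨ sgn₂ b c = 0 ∨ sgn₂ b c = 1)
    (hcoc₁ : ∀ (a : Ekm2) (c : Ek), ∑ b : Ekm1, sgn₀ a b * sgn₁ b c = 0)
    (hcoc₂ : ∀ (a : Ekm1) (c : Ekp1), ∑ b : Ek, sgn₁ a b * sgn₂ b c = 0)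
    (f : Ekm1 → ℂ) (g : Ek → ℂ) (hf : f = deltaDeriv μkm1 μk sgn₁ g)
    (lam : ℂ)
    (heig : deltaDeriv μkm1 μk sgn₁ (dDeriv sgn₁ f) +
        dDeriv sgn₀ (deltaDeriv μkm2 μkm1 sgn₀ f) = lam • f) :
    deltaDeriv μk μkp1 sgn₂ (dDeriv sgn₂ (dDeriv sgn₁ f)) +
        dDeriv sgn₁ (deltaDeriv μkm1 μk sgn₁ (dDeriv sgn₁ f)) =
      lam • dDeriv sgn₁ f := by
  -- Apply `d_{k-1}` to the eigenvalue equation: `d_{k-1} d_{k-2} = 0` kills the second summand,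
  -- and `d_k d_{k-1} = 0` kills the first summand of the goal.
  have h := congrArg (dDeriv sgn₁) heig
  rw [dDeriv_add, dDeriv_dDeriv sgn₀ sgn₁ hcoc₁, add_zero, dDeriv_smul] at h
  rw [dDeriv_dDeriv sgn₁ sgn₂ hcoc₂, deltaDeriv_zero, zero_add, h]
end

section
/- Let f : ℝ → ℝ satisfy the harmonic extension recurrence on dyadic points: for every integer m ≥ 1 and every even integer j with 0 ≤ j ≤ 2^m − 2, f((2j+1)/2^{m+1}) = (8/25)·f(j/2^m) + (4/5)·f((j+1)/2^m) − (3/25)·f((j+2)/2^m) and f((2j+3)/2^{m+1}) = (8/25)·f((j+2)/2^m) + (4/5)·f((j+1)/2^m) − (3/25)·f(j/2^m). Then for every integer m ≥ 1, ∑_{j=0}^{2^m − 1} |2·f((2j+1)/2^{m+1}) − f(j/2^m) − f((j+1)/2^m)| ≥ (3/25)·|f(1) − f(0)|. -/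
/-!
Group the dyadic intervals of level `m` into consecutive pairs, with endpoint values `a, b, c`.
By the recurrence, the two summands of a pair are `|(3/5)b - (9/25)a - (6/25)c|` and
`|(3/5)b - (6/25)a - (9/25)c|`; the difference of the two expressions is `(3/25)(c - a)`, so the
pair contributes at least `(3/25)|c - a|`. Telescoping over the pairs gives the bound.
-/

/-- For a function satisfying the harmonic extension recurrence on
dyadic points, the `L¹`-distance between consecutive dyadic approximations of the
increment measure is bounded below by `(3/25)·|f(1) − f(0)|`. -/
theorem dyadic_approximation_lower_bound
    (f : ℝ → ℝ)
    (hrec : ∀ m : ℕ, 1 ≤ m → ∀ j : ℕ, Even j → j ≤ 2 ^ m - 2 →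
      f ((2 * (j : ℝ) + 1) / 2 ^ (m + 1)) =
          (8 / 25) * f ((j : ℝ) / 2 ^ m) + (4 / 5) * f (((j : ℝ) + 1) / 2 ^ m)
            - (3 / 25) * f (((j : ℝ) + 2) / 2 ^ m) ∧
        f ((2 * (j : ℝ) + 3) / 2 ^ (m + 1)) =
          (8 / 25) * f (((j : ℝ) + 2) / 2 ^ m) + (4 / 5) * f (((j : ℝ) + 1) / 2 ^ m)
            - (3 / 25) * f ((j : ℝ) / 2 ^ m))
    (m : ℕ) (hm : 1 ≤ m) :
    (3 / 25) * |f 1 - f 0| ≤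
      ∑ j ∈ Finset.range (2 ^ m),
        |2 * f ((2 * (j : ℝ) + 1) / 2 ^ (m + 1)) - f ((j : ℝ) / 2 ^ m)
          - f (((j : ℝ) + 1) / 2 ^ m)| := by
  -- Telescoping over the first `n` pairs, by induction on `n`.
  have key : ∀ n : ℕ, 2 * n ≤ 2 ^ m →
      (3 / 25) * |f ((2 * (n : ℝ)) / 2 ^ m) - f 0| ≤
        ∑ j ∈ Finset.range (2 * n),
          |2 * f ((2 * (j : ℝ) + 1) / 2 ^ (m + 1)) - f ((j : ℝ) / 2 ^ m)
            - f (((j : ℝ) + 1) / 2 ^ m)| := by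
    intro n
    induction n with
    | zero => simp
    | succ n ih =>
      intro hn
      have ih' := ih (by omega)
      obtain ⟨h1, h2⟩ := hrec m hm (2 * n) (even_two_mul n) (by omega)
      rw [show 2 * (n + 1) = 2 * n + 1 + 1 by ring, Finset.sum_range_succ, Finset.sum_range_succ]
      push_cast at h1 h2 ⊢
      rw [show (2 * (2 * (n : ℝ) + 1) + 1) = 2 * (2 * (n : ℝ)) + 3 by ring,
        show (2 * (n : ℝ) + 1 + 1) = 2 * (n : ℝ) + 2 by ring,
        show (2 * ((n : ℝ) + 1)) = 2 * (n : ℝ) + 2 by ring, h1, h2]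
      generalize f (2 * (n : ℝ) / 2 ^ m) = a at *
      generalize f ((2 * (n : ℝ) + 1) / 2 ^ m) = b at *
      generalize f ((2 * (n : ℝ) + 2) / 2 ^ m) = c at *
      have htri := abs_sub_le c a (f 0)
      have hpair := abs_sub (2 * (8 / 25 * a + 4 / 5 * b - 3 / 25 * c) - a - b)
        (2 * (8 / 25 * c + 4 / 5 * b - 3 / 25 * a) - b - c)
      rw [show (2 * (8 / 25 * a + 4 / 5 * b - 3 / 25 * c) - a - b)
        - (2 * (8 / 25 * c + 4 / 5 * b - 3 / 25 * a) - b - c) = 3 / 25 * (c - a) by ring,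
        abs_mul, abs_of_pos (by norm_num : (0 : ℝ) < 3 / 25)] at hpair
      linarith
  have hpow : 2 * 2 ^ (m - 1) = 2 ^ m := by
    rw [← pow_succ', Nat.sub_add_cancel hm]
  have hpow' : (2 : ℝ) * 2 ^ (m - 1) = 2 ^ m := by exact_mod_cast hpow
  have h := key (2 ^ (m - 1)) hpow.le
  rw [hpow] at h
  push_cast at h
  rwa [hpow', div_self (by positivity)] at h
end

section
/- Let f : ℝ → ℝ satisfy the harmonic extension recurrence on dyadic points: for every integer m ≥ 1 and every even integer j with 0 ≤ j ≤ 2^m − 2, f((2j+1)/2^{m+1}) = (8/25)·f(j/2^m) + (4/5)·f((j+1)/2^m) − (3/25)·f((j+2)/2^m) and f((2j+3)/2^{m+1}) = (8/25)·f((j+2)/2^m) + (4/5)·f((j+1)/2^m) − (3/25)·f(j/2^m), and suppose f(1) ≠ f(0). For each m define the step function g_m : [0,1) → ℝ by g_m(t) = 2^m·(f((j+1)/2^m) − f(j/2^m)) for t ∈ [j/2^m, (j+1)/2^m), 0 ≤ j ≤ 2^m − 1. Then the sequence (g_m) is not a Cauchy sequence in L¹([0,1], Lebesgue measure); in particular there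 is no integrable function g on [0,1] with ∫_0^1 |g_m(t) − g(t)| dt → 0 as m → ∞. -/
/-!
On two adjacent level-`m` cells with `f`-increments `u` and `v`, the recurrence makes the `L¹`
change from `g m` to `g (m + 1)` equal to `(3/25)|3u - 2v| + (3/25)|3v - 2u|`, which is at least
`(3/25)|u + v|` (`cell_integral`, `pair_bound`). Adding over all pairs and using the triangle
inequality gives `‖g m - g (m + 1)‖₁ ≥ (3/25)|f 1 - f 0|` for every `m ≥ 1` (`step_gap`), so the
sequence is not Cauchy. An `L¹` limit would make it Cauchy, as each `g m` is integrable
(`step_integrable`).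
-/

open MeasureTheory Filter

/-- The midpoint identity: refining a dyadic cell changes the step density, in `L¹` of that cell,
by the second difference of `f` over the endpoints and the midpoint of the cell. -/
lemma cell_integral (f : ℝ → ℝ) (g : ℕ → ℝ → ℝ)
    (hg : ∀ m : ℕ, ∀ j : ℕ, j < 2 ^ m →
      ∀ t ∈ Set.Ico ((j : ℝ) / 2 ^ m) (((j : ℝ) + 1) / 2 ^ m),
        g m t = 2 ^ m * (f (((j : ℝ) + 1) / 2 ^ m) - f ((j : ℝ) / 2 ^ m)))
    (m j : ℕ) (hj : j < 2 ^ m) :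
    IntervalIntegrable (fun t => |g m t - g (m + 1) t|) volume
        ((j : ℝ) / 2 ^ m) (((j : ℝ) + 1) / 2 ^ m) ∧
      ∫ t in ((j : ℝ) / 2 ^ m)..(((j : ℝ) + 1) / 2 ^ m), |g m t - g (m + 1) t| =
        |f ((j : ℝ) / 2 ^ m) + f (((j : ℝ) + 1) / 2 ^ m)
          - 2 * f ((2 * (j : ℝ) + 1) / 2 ^ (m + 1))| := by
  have hP : (0 : ℝ) < 2 ^ m := by positivity
  have h0 := hg m j hj
  have h1 := hg (m + 1) (2 * j) (by rw [pow_succ]; omega)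
  have h2 := hg (m + 1) (2 * j + 1) (by rw [pow_succ]; omega)
  have e0 : ((2 * j : ℕ) : ℝ) / 2 ^ (m + 1) = (j : ℝ) / 2 ^ m := by
    push_cast; rw [pow_succ]; field_simp
  have e1 : (((2 * j : ℕ) : ℝ) + 1) / 2 ^ (m + 1) = (2 * (j : ℝ) + 1) / 2 ^ (m + 1) := by
    push_cast; rfl
  have e2 : ((2 * j + 1 : ℕ) : ℝ) / 2 ^ (m + 1) = (2 * (j : ℝ) + 1) / 2 ^ (m + 1) := by
    push_cast; rfl
  have e3 : (((2 * j + 1 : ℕ) : ℝ) + 1) / 2 ^ (m + 1) = ((j : ℝ) + 1) / 2 ^ m := by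
    push_cast; rw [pow_succ]; field_simp; ring
  rw [e0, e1] at h1
  rw [e2, e3] at h2
  have hl : (2 * (j : ℝ) + 1) / 2 ^ (m + 1) - (j : ℝ) / 2 ^ m = 1 / (2 * 2 ^ m) := by
    rw [pow_succ]; field_simp; ring
  have hr : ((j : ℝ) + 1) / 2 ^ m - (2 * (j : ℝ) + 1) / 2 ^ (m + 1) = 1 / (2 * 2 ^ m) := by
    rw [pow_succ]; field_simp; ring
  have hpos : (0 : ℝ) < 1 / (2 * 2 ^ m) := by positivity
  rw [pow_succ (2 : ℝ) m] at h1 h2 hl hr ⊢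
  generalize (j : ℝ) / 2 ^ m = p at *
  generalize ((j : ℝ) + 1) / 2 ^ m = q at *
  generalize (2 * (j : ℝ) + 1) / (2 ^ m * 2) = r at *
  generalize (2 : ℝ) ^ m = P at *
  have hpr : p ≤ r := by linarith
  have hrq : r ≤ q := by linarith
  have c1 : Set.EqOn (fun _ => P * |f p + f q - 2 * f r|)
      (fun t => |g m t - g (m + 1) t|) (Set.Ioo p r) := by
    intro t ht
    simp only
    rw [h0 t ⟨ht.1.le, ht.2.trans_le hrq⟩, h1 t ⟨ht.1.le, ht.2⟩]
    nth_rw 1 [← abs_of_pos hP]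
    rw [← abs_mul]
    congr 1
    ring
  have c2 : Set.EqOn (fun _ => P * |f p + f q - 2 * f r|)
      (fun t => |g m t - g (m + 1) t|) (Set.Ioo r q) := by
    intro t ht
    simp only
    rw [h0 t ⟨hpr.trans ht.1.le, ht.2⟩, h2 t ⟨ht.1.le, ht.2⟩]
    nth_rw 1 [← abs_of_pos hP]
    rw [← abs_mul, ← abs_neg]
    congr 1
    ring
  have i1 : IntervalIntegrable (fun t => |g m t - g (m + 1) t|) volume p r :=
    intervalIntegrable_const.congr_uIoo (Set.uIoo_of_le hpr ▸ c1)
  have i2 : IntervalIntegrable (fun t => |g m t - g (m + 1) t|) volume r q :=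
    intervalIntegrable_const.congr_uIoo (Set.uIoo_of_le hrq ▸ c2)
  refine ⟨i1.trans i2, ?_⟩
  rw [← intervalIntegral.integral_add_adjacent_intervals i1 i2,
    ← intervalIntegral.integral_congr_Ioo_of_le hpr c1,
    ← intervalIntegral.integral_congr_Ioo_of_le hrq c2,
    intervalIntegral.integral_const, intervalIntegral.integral_const, hl, hr]
  simp only [smul_eq_mul]
  field_simp
  ring

lemma step_integrable (f : ℝ → ℝ) (g : ℕ → ℝ → ℝ)
    (hg : ∀ m : ℕ, ∀ j : ℕ, j < 2 ^ m →
      ∀ t ∈ Set.Ico ((j : ℝ) / 2 ^ m) (((j : ℝ) + 1) / 2 ^ m),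
        g m t = 2 ^ m * (f (((j : ℝ) + 1) / 2 ^ m) - f ((j : ℝ) / 2 ^ m))) (m : ℕ) :
    IntegrableOn (g m) (Set.Icc (0 : ℝ) 1) := by
  have h : IntervalIntegrable (g m) volume (((0 : ℕ) : ℝ) / 2 ^ m)
      (((2 ^ m : ℕ) : ℝ) / 2 ^ m) := by
    refine IntervalIntegrable.trans_iterate (a := fun k : ℕ => (k : ℝ) / 2 ^ m) fun k hk => ?_
    simp only [Nat.cast_add, Nat.cast_one]
    have hle : (k : ℝ) / 2 ^ m ≤ ((k : ℝ) + 1) / 2 ^ m := by gcongr; linarith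
    refine (intervalIntegrable_const
      (c := 2 ^ m * (f (((k : ℝ) + 1) / 2 ^ m) - f ((k : ℝ) / 2 ^ m)))).congr_uIoo ?_
    rw [Set.uIoo_of_le hle]
    exact fun t ht => (hg m k hk t ⟨ht.1.le, ht.2⟩).symm
  have e : (((2 ^ m : ℕ) : ℝ)) / 2 ^ m = 1 := by push_cast; field_simp
  rw [e, Nat.cast_zero, zero_div] at h
  exact (intervalIntegrable_iff_integrableOn_Icc_of_le zero_le_one).1 h

/-- On a pair of adjacent cells with increments `u` and `v`, the two second differences produced by
the recurrence are `(3/25)(3u - 2v)` and `(3/25)(3v - 2u)` up to sign, and these sum to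
`(3/25)(u + v)`. -/
lemma pair_bound (a b c x y : ℝ)
    (hx : x = (8 / 25) * a + (4 / 5) * b - (3 / 25) * c)
    (hy : y = (8 / 25) * c + (4 / 5) * b - (3 / 25) * a) :
    (3 / 25) * |c - a| ≤ |a + b - 2 * x| + |b + c - 2 * y| := by
  have h := abs_sub (b + c - 2 * y) (a + b - 2 * x)
  have e : b + c - 2 * y - (a + b - 2 * x) = (3 / 25) * (c - a) := by
    rw [hx, hy]; ring
  rw [e, abs_mul, abs_of_pos (by norm_num : (0 : ℝ) < 3 / 25)] at h
  linarith

/-- Consecutive step densities stay a fixed `L¹` distance apart, at every level `n + 1 ≥ 1`. -/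
lemma step_gap (f : ℝ → ℝ)
    (hrec : ∀ m : ℕ, 1 ≤ m → ∀ j : ℕ, Even j → j ≤ 2 ^ m - 2 →
      f ((2 * (j : ℝ) + 1) / 2 ^ (m + 1)) =
          (8 / 25) * f ((j : ℝ) / 2 ^ m) + (4 / 5) * f (((j : ℝ) + 1) / 2 ^ m)
            - (3 / 25) * f (((j : ℝ) + 2) / 2 ^ m) ∧
        f ((2 * (j : ℝ) + 3) / 2 ^ (m + 1)) =
          (8 / 25) * f (((j : ℝ) + 2) / 2 ^ m) + (4 / 5) * f (((j : ℝ) + 1) / 2 ^ m)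
            - (3 / 25) * f ((j : ℝ) / 2 ^ m))
    (g : ℕ → ℝ → ℝ)
    (hg : ∀ m : ℕ, ∀ j : ℕ, j < 2 ^ m →
      ∀ t ∈ Set.Ico ((j : ℝ) / 2 ^ m) (((j : ℝ) + 1) / 2 ^ m),
        g m t = 2 ^ m * (f (((j : ℝ) + 1) / 2 ^ m) - f ((j : ℝ) / 2 ^ m))) (n : ℕ) :
    (3 / 25) * |f 1 - f 0| ≤ ∫ t in Set.Icc (0 : ℝ) 1, |g (n + 1) t - g (n + 2) t| := by
  set d : ℕ → ℝ := fun j => |f ((j : ℝ) / 2 ^ (n + 1)) + f (((j : ℝ) + 1) / 2 ^ (n + 1))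
          - 2 * f ((2 * (j : ℝ) + 1) / 2 ^ (n + 1 + 1))| with hd
  have hsum : ∫ t in Set.Icc (0 : ℝ) 1, |g (n + 1) t - g (n + 2) t| =
      ∑ j ∈ Finset.range (2 * 2 ^ n), d j := by
    have h := intervalIntegral.sum_integral_adjacent_intervals (μ := volume)
      (f := fun t => |g (n + 1) t - g (n + 2) t|)
      (a := fun k : ℕ => (k : ℝ) / 2 ^ (n + 1)) (n := 2 ^ (n + 1)) (fun k hk => by
        simpa only [Nat.cast_add, Nat.cast_one] using (cell_integral f g hg (n + 1) k hk).1)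
    have e : (((2 ^ (n + 1) : ℕ) : ℝ)) / 2 ^ (n + 1) = 1 := by push_cast; field_simp
    simp only [e, Nat.cast_zero, zero_div, Nat.cast_add, Nat.cast_one] at h
    rw [integral_Icc_eq_integral_Ioc, ← intervalIntegral.integral_of_le zero_le_one, ← h,
      pow_succ, mul_comm]
    refine Finset.sum_congr rfl fun k hk => ?_
    refine (cell_integral f g hg (n + 1) k ?_).2
    rw [Finset.mem_range] at hk
    rw [pow_succ]; omega
  have key : ∀ K : ℕ, K ≤ 2 ^ n →
      (3 / 25) * |f ((K : ℝ) / 2 ^ n) - f 0| ≤ ∑ j ∈ Finset.range (2 * K), d j := by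
    intro K
    induction K with
    | zero => simp
    | succ K ih =>
      intro hK
      have ih := ih (by omega)
      rw [show 2 * (K + 1) = 2 * K + 1 + 1 by ring, Finset.sum_range_succ, Finset.sum_range_succ]
      obtain ⟨hx, hy⟩ := hrec (n + 1) (by omega) (2 * K) (even_two_mul K)
        (by rw [pow_succ]; omega)
      have hp := pair_bound _ _ _ _ _ hx hy
      have e0 : ((2 * K : ℕ) : ℝ) / 2 ^ (n + 1) = (K : ℝ) / 2 ^ n := by
        push_cast; rw [pow_succ]; field_simp
      have e2 : (((2 * K : ℕ) : ℝ) + 2) / 2 ^ (n + 1) = ((K + 1 : ℕ) : ℝ) / 2 ^ n := by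
        push_cast; rw [pow_succ]; field_simp
      have d1 : d (2 * K + 1) = |f ((((2 * K : ℕ) : ℝ) + 1) / 2 ^ (n + 1))
          + f ((((2 * K : ℕ) : ℝ) + 2) / 2 ^ (n + 1))
          - 2 * f ((2 * ((2 * K : ℕ) : ℝ) + 3) / 2 ^ (n + 1 + 1))| := by
        simp only [hd]
        push_cast
        ring_nf
      rw [← d1] at hp
      change _ ≤ d (2 * K) + _ at hp
      rw [e0, e2] at hp
      have ht := abs_sub_le (f (((K + 1 : ℕ) : ℝ) / 2 ^ n)) (f ((K : ℝ) / 2 ^ n)) (f 0)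
      linarith
  have hfin := key (2 ^ n) le_rfl
  have e : (((2 ^ n : ℕ) : ℝ)) / 2 ^ n = 1 := by push_cast; field_simp
  rw [e] at hfin
  rwa [hsum]

/-- For a function `f` satisfying the harmonic extension recurrence
on dyadic points with `f 1 ≠ f 0`, the dyadic step-function approximations `g m` to
the increment measure of `f` do not form a Cauchy sequence in `L¹([0,1])`; in
particular they converge to no integrable function in `L¹([0,1])`. -/
theorem increment_measure_not_absolutely_continuous
    (f : ℝ → ℝ)
    (hrec : ∀ m : ℕ, 1 ≤ m → ∀ j : ℕ, Even j → j ≤ 2 ^ m - 2 →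
      f ((2 * (j : ℝ) + 1) / 2 ^ (m + 1)) =
          (8 / 25) * f ((j : ℝ) / 2 ^ m) + (4 / 5) * f (((j : ℝ) + 1) / 2 ^ m)
            - (3 / 25) * f (((j : ℝ) + 2) / 2 ^ m) ∧
        f ((2 * (j : ℝ) + 3) / 2 ^ (m + 1)) =
          (8 / 25) * f (((j : ℝ) + 2) / 2 ^ m) + (4 / 5) * f (((j : ℝ) + 1) / 2 ^ m)
            - (3 / 25) * f ((j : ℝ) / 2 ^ m))
    (hne : f 1 ≠ f 0)
    (g : ℕ → ℝ → ℝ)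
    (hg : ∀ m : ℕ, ∀ j : ℕ, j < 2 ^ m →
      ∀ t ∈ Set.Ico ((j : ℝ) / 2 ^ m) (((j : ℝ) + 1) / 2 ^ m),
        g m t = 2 ^ m * (f (((j : ℝ) + 1) / 2 ^ m) - f ((j : ℝ) / 2 ^ m))) :
    (¬ ∀ ε : ℝ, 0 < ε → ∃ N : ℕ, ∀ m ≥ N, ∀ n ≥ N,
        (∫ t in Set.Icc (0 : ℝ) 1, |g m t - g n t|) < ε) ∧
    ¬ ∃ h : ℝ → ℝ, IntegrableOn h (Set.Icc (0 : ℝ) 1) ∧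
        Tendsto (fun m : ℕ => ∫ t in Set.Icc (0 : ℝ) 1, |g m t - h t|) atTop (nhds 0) := by
  have hpos : 0 < (3 / 25) * |f 1 - f 0| :=
    mul_pos (by norm_num) (abs_pos.2 (sub_ne_zero.2 hne))
  have hnc : ¬ ∀ ε : ℝ, 0 < ε → ∃ N : ℕ, ∀ m ≥ N, ∀ n ≥ N,
      (∫ t in Set.Icc (0 : ℝ) 1, |g m t - g n t|) < ε := by
    intro hC
    obtain ⟨N, hN⟩ := hC _ hpos
    exact absurd (step_gap f hrec g hg N) (not_le.2 (hN (N + 1) (by omega) (N + 2) (by omega)))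
  refine ⟨hnc, ?_⟩
  rintro ⟨h, hh, hlim⟩
  refine hnc fun ε hε => ?_
  obtain ⟨N, hN⟩ := eventually_atTop.1 (hlim.eventually_lt_const (half_pos hε))
  refine ⟨N, fun m hm n hn => ?_⟩
  have im : IntegrableOn (fun t => |g m t - h t|) (Set.Icc (0 : ℝ) 1) :=
    ((step_integrable f g hg m).sub hh).abs
  have jn : IntegrableOn (fun t => |g n t - h t|) (Set.Icc (0 : ℝ) 1) :=
    ((step_integrable f g hg n).sub hh).abs
  have imn : IntegrableOn (fun t => |g m t - g n t|) (Set.Icc (0 : ℝ) 1) :=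
    ((step_integrable f g hg m).sub (step_integrable f g hg n)).abs
  calc ∫ t in Set.Icc (0 : ℝ) 1, |g m t - g n t|
      ≤ ∫ t in Set.Icc (0 : ℝ) 1, (|g m t - h t| + |g n t - h t|) := by
        refine integral_mono imn (im.add jn) fun t => ?_
        have := abs_sub_le (g m t) (h t) (g n t)
        rwa [abs_sub_comm (h t) (g n t)] at this
    _ = (∫ t in Set.Icc (0 : ℝ) 1, |g m t - h t|) + ∫ t in Set.Icc (0 : ℝ) 1, |g n t - h t| :=
        integral_add im jn
    _ < ε := by linarith [hN m hm, hN n hn]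
end
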